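/- Let τ > 0, ξ ∈ ℝ with |ξ| < 1, and let N : [0,τ] → ℝ be continuous, and define Δ(s) = 1 − ξ e^{−sτ} − ∫₀^τ N(ν) e^{−sν} dν, M(ω) = Re(Δ(iω)) and S(ω) = Im(Δ(iω)). Assume that Δ has no roots on the imaginary axis and that ∫₀^τ N(ν) dν < 1 − ξ. Let ρ₁ ≥ ρ₂ ≥ … ≥ ρ_m > 0 be the positive zeros of M (a finite list since |ξ| < 1), repeated according to their multiplicities as zeros of the real-analytic function M and ordered decreasingly. Then the number of roots of Δ lying in the open right half-plane {s ∈ ℂ : Re s > 0}, counted with multiplicity (i.e., the sum of the orders of the zeros of the entire function Δ in that half-plane), equals Γ := Σ_{j=1}^m (−1)^{j−1} sign(S(ρ_j)). -/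

import Mathlib

/-!
The number `n` of zeros of `Δ` in the right half-plane is read off from the change of argument of
`Δ` along the imaginary axis, and that change is in turn read off from the zeros of `M = Re Δ(iω)`.

*Argument principle on a half-disk.* In the closed right half-plane `|e^{-sτ}| ≤ 1` and the Laplace
transform of `N` tends to `0` (`laplace_small`, by Weierstrass approximation and one integration by
parts), so `|ξ| < 1` gives a radius `R` such that `Re Δ(s) > 0` for `Re s ≥ 0`, `|s| ≥ R`. Hence the
zeros are finitely many and `Δ(s) = ∏ (s - a)^{ord a} · g(s)` with `g` entire and zero free on the
closed half-plane. Instead of contour integrals, continuous logarithms are used: `θ` of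
`ω ↦ Δ(iω)` and `ψ` of `t ↦ Δ(R e^{it})`. `HasArgDrop Δ R n` says that the change of `θ` over
`[-R, R]` is that of `ψ` over `[-π/2, π/2]` minus `2πi n`. It is multiplicative, holds with `n = 1`
for `s - a` (`hasArgDrop_sub`) and with `n = 0` for `g` (`hasArgDrop_of_ne_zero`), so it holds for
`Δ` with `n` the number of zeros (`hasArgDrop_of_zeros`).

*Symmetry.* On the arc, `ψ` differs from the principal logarithm by a constant, and
`Δ(conj s) = conj Δ(s)`; with `Θ = Im θ` this gives `Θ(R) = Θ(0) + arg Δ(iR) - π n`, where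
`|arg Δ(iR)| < π/2` and `Θ(0) ∈ π ℤ`. Therefore `n = round (Θ(0)/π) - round (Θ(R)/π)`.

*Counting.* The integer `round (Θ/π)` can jump only at zeros of `M = r cos Θ`. Next to a zero `x`, it
equals `2l` where `M > 0` and `2l + sign (S x)` where `M < 0` (`round_near_half`). Since `M > 0`
beyond `R`, the sign of `M` at `y` is `(-1)^c` with `c` the number of indices `j` with `y < ρ j`, so
the jumps match those of the partial sums of `(-1)^j sign (S (ρ j))` over `y < ρ j`
(`counting`). Comparing `0` with `R` gives the formula.
-/

open MeasureTheory Complex Real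

/-- The order (multiplicity) of `x` as a zero of the (analytic) function `f`: the
smallest `k` such that the `k`-th derivative of `f` at `x` does not vanish. -/
noncomputable def zeroOrder {𝕜 : Type*} [NontriviallyNormedField 𝕜] (f : 𝕜 → 𝕜) (x : 𝕜) : ℕ :=
  sInf {k : ℕ | iteratedDeriv k f x ≠ 0}

open Filter Topology

/-! ### Preliminaries -/

/-- A function that is constant near each point of `[0, R]`, except possibly at the point itself, takes
the same nearby value at all points of `[0, R]`. The punctured neighbourhoods
allow for isolated exceptional values of `f`. -/
lemma exists_const_of_punctured {X : Type*} {f : ℝ → X} {R : ℝ}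
    (h : ∀ x ∈ Set.Icc 0 R, ∃ c, ∀ᶠ y in 𝓝[≠] x, f y = c) {x₁ x₂ : ℝ}
    (h₁ : x₁ ∈ Set.Icc 0 R) (h₂ : x₂ ∈ Set.Icc 0 R) :
    ∃ c, (∀ᶠ y in 𝓝[≠] x₁, f y = c) ∧ ∀ᶠ y in 𝓝[≠] x₂, f y = c := by
  refine (isPreconnected_Icc (a := (0 : ℝ)) (b := R)).induction₂
    (fun u v => ∃ c, (∀ᶠ y in 𝓝[≠] u, f y = c) ∧ ∀ᶠ y in 𝓝[≠] v, f y = c) ?_ ?_ ?_ h₁ h₂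
  · intro x hx
    obtain ⟨c, hc⟩ := h x hx
    have h1 : ∀ᶠ y in 𝓝[≠] x, ∀ᶠ z in 𝓝[≠] y, f z = c := by
      filter_upwards [eventually_eventually_nhdsWithin.2 hc, self_mem_nhdsWithin] with y hy hyx
      rw [IsOpen.nhdsWithin_eq isOpen_compl_singleton hyx] at hy
      exact hy.filter_mono nhdsWithin_le_nhds
    have h2 : ∀ᶠ y in 𝓝 x, ∀ᶠ z in 𝓝[≠] y, f z = c := by
      rw [eventually_nhdsWithin_iff] at h1
      filter_upwards [h1] with y hy
      by_cases hyx : y = x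
      · exact hyx ▸ hc
      · exact hy hyx
    filter_upwards [nhdsWithin_le_nhds h2] with y hy
    exact ⟨c, hc, hy⟩
  · rintro x y z - - - ⟨c, h1, h2⟩ ⟨d, h3, h4⟩
    obtain ⟨w, hw1, hw2⟩ := (h2.and h3).exists
    exact ⟨c, h1, by rw [← hw1, hw2]; exact h4⟩
  · rintro x y - - ⟨c, h1, h2⟩
    exact ⟨c, h2, h1⟩

/-- A lower set of `Fin m` is an initial segment, so the alternating sum over it is `0` or `1`
according to the parity of its size. -/
lemma sum_neg_one_pow_of_isLowerSet {m : ℕ} (I : Finset (Fin m))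
    (hI : ∀ i ∈ I, ∀ j, j ≤ i → j ∈ I) :
    ∑ j ∈ I, (-1 : ℝ) ^ (j : ℕ) = (1 - (-1) ^ I.card) / 2 := by
  have himg : I.map Fin.valEmbedding = Finset.range I.card := by
    set J := I.map Fin.valEmbedding with hJ
    have hcard : J.card = I.card := by simp [hJ]
    have hlow : ∀ i ∈ J, ∀ j, j ≤ i → j ∈ J := by
      intro i hi j hj
      simp only [hJ, Finset.mem_map, Fin.valEmbedding_apply] at hi ⊢
      obtain ⟨a, ha, rfl⟩ := hi
      exact ⟨⟨j, lt_of_le_of_lt hj a.2⟩, hI a ha _ hj, rfl⟩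
    refine Finset.eq_of_subset_of_card_le ?_ (by simp [hcard])
    intro i hi
    rw [Finset.mem_range, ← hcard]
    have : Finset.range (i + 1) ⊆ J := fun j hj => hlow i hi j (by
      rw [Finset.mem_range] at hj; omega)
    have := Finset.card_le_card this
    simpa using this
  have : ∑ j ∈ I, (-1 : ℝ) ^ (j : ℕ) = ∑ j ∈ Finset.range I.card, (-1 : ℝ) ^ j := by
    rw [← himg, Finset.sum_map]; rfl
  rw [this]
  generalize I.card = n
  induction n with
  | zero => simp
  | succ n ih => rw [Finset.sum_range_succ, ih, pow_succ]; ring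

lemma zeroOrder_eq {𝕜 : Type*} [RCLike 𝕜] {f : 𝕜 → 𝕜} {x : 𝕜}
    (hf : AnalyticAt 𝕜 f x) (hne : analyticOrderAt f x ≠ ⊤) :
    (zeroOrder f x : ℕ∞) = analyticOrderAt f x := by
  obtain ⟨n, hn⟩ := ENat.ne_top_iff_exists.1 hne
  rw [← hn]
  obtain ⟨h1, h2⟩ := (analyticOrderAt_eq_nat_iff_iteratedDeriv_eq_zero hf).1 hn.symm
  have : zeroOrder f x = n := by
    refine le_antisymm (Nat.sInf_le h2) ?_
    by_contra! hlt
    exact Nat.sInf_mem (s := {k : ℕ | iteratedDeriv k f x ≠ 0}) ⟨n, h2⟩ (h1 _ hlt)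
  rw [this]

/-! ### Counting sheets of a continuous argument -/

lemma round_eq_of_abs_sub_lt {t : ℝ} {k : ℤ} (h : |t - k| < 1 / 2) : round t = k := by
  rw [abs_lt] at h
  rw [round_eq, Int.floor_eq_iff]
  constructor <;> linarith [h.1, h.2]

lemma eventually_round_eq {Θ : ℝ → ℝ} (hΘ : Continuous Θ) {x : ℝ} (hx : Real.cos (Θ x) ≠ 0) :
    ∀ᶠ y in 𝓝 x, round (Θ y / π) = round (Θ x / π) := by
  set k := round (Θ x / π) with hk
  have hlt : |Θ x / π - k| < 1 / 2 := by
    refine lt_of_le_of_ne (abs_sub_round _) fun heq => hx ?_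
    rw [Real.cos_eq_zero_iff]
    rcases (abs_eq (by norm_num)).1 heq with h | h
    · refine ⟨k, ?_⟩
      have : Θ x / π = k + 1 / 2 := by linarith
      rw [div_eq_iff Real.pi_ne_zero] at this
      rw [this]; ring
    · refine ⟨k - 1, ?_⟩
      have : Θ x / π = k - 1 / 2 := by linarith
      rw [div_eq_iff Real.pi_ne_zero] at this
      rw [this]; push_cast; ring
  have hc : Continuous fun y => |Θ y / π - k| := by fun_prop
  filter_upwards [hc.continuousAt.eventually_lt continuousAt_const hlt] with y hy
  exact round_eq_of_abs_sub_lt hy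

lemma exists_eq_of_cos_eq_zero {t : ℝ} (h : Real.cos t = 0) :
    ∃ (ε : ℝ) (l : ℤ), (ε = 1 ∨ ε = -1) ∧ t = ε * (π / 2) + 2 * π * l ∧ Real.sin t = ε := by
  obtain ⟨k, hk⟩ := Real.cos_eq_zero_iff.1 h
  rcases Int.even_or_odd' k with ⟨l, rfl | rfl⟩
  · have ht : t = 1 * (π / 2) + 2 * π * l := by rw [hk]; push_cast; ring
    refine ⟨1, l, Or.inl rfl, ht, ?_⟩
    rw [ht, show (1 : ℝ) * (π / 2) + 2 * π * l = π / 2 + l * (2 * π) by ring,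
      Real.sin_add_int_mul_two_pi, Real.sin_pi_div_two]
  · have ht : t = (-1) * (π / 2) + 2 * π * ((l + 1 : ℤ) : ℝ) := by rw [hk]; push_cast; ring
    refine ⟨-1, l + 1, Or.inr rfl, ht, ?_⟩
    rw [ht, show (-1 : ℝ) * (π / 2) + 2 * π * ((l + 1 : ℤ) : ℝ)
      = -(π / 2) + ((l + 1 : ℤ) : ℝ) * (2 * π) by ring,
      Real.sin_add_int_mul_two_pi, Real.sin_neg, Real.sin_pi_div_two]

/-- Near the odd multiple `ε π/2 + 2πl` of `π/2`, where the sine is `ε`, the rounding of `t / π` is `2l`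
on the side where the cosine is positive and `2l + ε` on the other side. -/
lemma round_near_half {ε t : ℝ} {l : ℤ} (hε : ε = 1 ∨ ε = -1)
    (ht : |t - (ε * (π / 2) + 2 * π * l)| < π / 2) (hne : Real.cos t ≠ 0) :
    (round (t / π) : ℝ) = 2 * l + ε * (if 0 < Real.cos t then 0 else 1) := by
  obtain ⟨δ, hδ⟩ : ∃ δ, δ = ε * (t - (ε * (π / 2) + 2 * π * l)) := ⟨_, rfl⟩
  have hεε : ε * ε = 1 := by rcases hε with rfl | rfl <;> norm_num
  have ht' : t = ε * (π / 2 + δ) + 2 * π * l := by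
    rw [hδ]; linear_combination (2 * π * l + ε * (π / 2) - t) * hεε
  have hδlt : |δ| < π / 2 := by
    have h1 : |ε| = 1 := by rcases hε with rfl | rfl <;> norm_num
    rw [hδ, abs_mul, h1, one_mul]; exact ht
  have hcos : Real.cos t = -Real.sin δ := by
    rw [ht', show ε * (π / 2 + δ) + 2 * π * l = ε * (π / 2 + δ) + l * (2 * π) by ring,
      Real.cos_add_int_mul_two_pi]
    rcases hε with rfl | rfl
    · rw [one_mul, add_comm, Real.cos_add_pi_div_two]
    · rw [neg_one_mul, Real.cos_neg, add_comm, Real.cos_add_pi_div_two]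
  have hπ := Real.pi_pos
  rw [abs_lt] at hδlt
  have hdiv : t / π = 2 * l + ε * (1 / 2 + δ / π) := by
    rw [ht']; field_simp; ring
  have hb1 : δ / π < 1 / 2 := by rw [div_lt_iff₀ hπ]; linarith
  have hb2 : -(1 / 2) < δ / π := by rw [lt_div_iff₀ hπ]; linarith
  split_ifs with hpos
  · have hδneg : δ < 0 := by
      by_contra! h
      have := Real.sin_nonneg_of_nonneg_of_le_pi h (by linarith)
      linarith
    have hb3 : δ / π < 0 := div_neg_of_neg_of_pos hδneg hπ
    have : round (t / π) = 2 * l := by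
      apply round_eq_of_abs_sub_lt
      rw [hdiv]; push_cast
      rcases hε with rfl | rfl <;> rw [abs_lt] <;> constructor <;> linarith
    rw [this]; push_cast; ring
  · have hδpos : 0 < δ := by
      by_contra! h
      have := Real.sin_nonpos_of_nonpos_of_neg_pi_le h (by linarith)
      exact hpos (lt_of_le_of_ne (by linarith) hne.symm)
    have hb3 : 0 < δ / π := div_pos hδpos hπ
    rcases hε with rfl | rfl
    · have : round (t / π) = 2 * l + 1 := by
        apply round_eq_of_abs_sub_lt
        rw [hdiv]; push_cast
        rw [abs_lt]; constructor <;> linarith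
      rw [this]; push_cast; ring
    · have : round (t / π) = 2 * l - 1 := by
        apply round_eq_of_abs_sub_lt
        rw [hdiv]; push_cast
        rw [abs_lt]; constructor <;> linarith
      rw [this]; push_cast; ring

lemma eventually_filter_gt {m : ℕ} (ρ : Fin m → ℝ) (x : ℝ) :
    ∀ᶠ y in 𝓝[>] x, (Finset.univ.filter fun j => y < ρ j) = Finset.univ.filter fun j => x < ρ j := by
  have : ∀ j, ∀ᶠ y in 𝓝[>] x, (y < ρ j ↔ x < ρ j) := by
    intro j
    by_cases h : x < ρ j
    · filter_upwards [nhdsWithin_le_nhds (eventually_lt_nhds h)] with y hy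
      simp [hy, h]
    · filter_upwards [self_mem_nhdsWithin] with y hy
      simp only [h, iff_false, not_lt]
      exact (not_lt.1 h).trans (le_of_lt hy)
  filter_upwards [eventually_all.2 this] with y hy
  ext j; simp [hy j]

lemma eventually_filter_lt {m : ℕ} (ρ : Fin m → ℝ) (x : ℝ) :
    ∀ᶠ y in 𝓝[<] x, (Finset.univ.filter fun j => y < ρ j) = Finset.univ.filter fun j => x ≤ ρ j := by
  have : ∀ j, ∀ᶠ y in 𝓝[<] x, (y < ρ j ↔ x ≤ ρ j) := by
    intro j
    by_cases h : x ≤ ρ j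
    · filter_upwards [self_mem_nhdsWithin] with y hy
      simp only [h, iff_true]
      exact lt_of_lt_of_le hy h
    · filter_upwards [nhdsWithin_le_nhds (eventually_gt_nhds (not_le.1 h))] with y hy
      simp only [h, iff_false, not_lt]
      exact le_of_lt hy
  filter_upwards [eventually_all.2 this] with y hy
  ext j; simp [hy j]

lemma filter_le_eq {m : ℕ} (ρ : Fin m → ℝ) (x : ℝ) :
    (Finset.univ.filter fun j => x ≤ ρ j) =
      (Finset.univ.filter fun j => x < ρ j) ∪ Finset.univ.filter fun j => ρ j = x := by
  ext j; simp [le_iff_lt_or_eq, eq_comm]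

lemma disjoint_filter_lt_eq {m : ℕ} (ρ : Fin m → ℝ) (x : ℝ) :
    Disjoint (Finset.univ.filter fun j => x < ρ j) (Finset.univ.filter fun j => ρ j = x) := by
  rw [Finset.disjoint_left]
  intro j h1 h2
  simp only [Finset.mem_filter, Finset.mem_univ, true_and] at h1 h2
  exact h1.ne h2.symm

/-- If the order of `M` at `x` is the number of indices with `ρ j = x`, then the sign change of `M`
across `x` is compensated by the change of parity of the number of `j` with `y < ρ j`. -/
lemma punctured_sign_const {M : ℝ → ℝ} {m : ℕ} {ρ : Fin m → ℝ} {x : ℝ}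
    (hM : AnalyticAt ℝ M x)
    (hord : analyticOrderAt M x = ((Finset.univ.filter fun j => ρ j = x).card : ℕ∞)) :
    ∃ p : Prop, ∀ᶠ y in 𝓝[≠] x,
      (0 < (-1) ^ (Finset.univ.filter fun j => y < ρ j).card * M y) = p := by
  obtain ⟨u, hu, hux, hMu⟩ := (hM.analyticOrderAt_eq_natCast).1 hord
  set d := (Finset.univ.filter fun j => ρ j = x).card with hd
  set c := (Finset.univ.filter fun j => x < ρ j).card with hc
  have hcd : (Finset.univ.filter fun j => x ≤ ρ j).card = c + d := by
    rw [filter_le_eq, Finset.card_union_of_disjoint (disjoint_filter_lt_eq ρ x)]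
  have husign : ∀ᶠ y in 𝓝 x, (0 < u y ↔ 0 < u x) ∧ (u y < 0 ↔ u x < 0) := by
    rcases lt_or_gt_of_ne hux with h | h
    · filter_upwards [hu.continuousAt.eventually_lt continuousAt_const h] with y hy
      exact ⟨by constructor <;> intro <;> linarith, by simp [hy, h]⟩
    · filter_upwards [continuousAt_const.eventually_lt hu.continuousAt h] with y hy
      exact ⟨by simp [hy, h], by constructor <;> intro <;> linarith⟩
  have key : ∀ y, ((0 < u y ↔ 0 < u x) ∧ (u y < 0 ↔ u x < 0)) →
      (0 < (-1) ^ c * u y ↔ 0 < (-1) ^ c * u x) := by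
    rintro y ⟨h1, h2⟩
    rcases neg_one_pow_eq_or ℝ c with h | h <;> simp [h, h1, h2]
  refine ⟨0 < (-1) ^ c * u x, ?_⟩
  rw [← Set.Iio_union_Ioi, nhdsWithin_union, eventually_sup]
  constructor
  · filter_upwards [eventually_filter_lt ρ x, nhdsWithin_le_nhds hMu, nhdsWithin_le_nhds husign,
      self_mem_nhdsWithin] with y h1 h2 h3 h4
    have h5 : 0 < (x - y) ^ d := pow_pos (sub_pos.2 h4) _
    rw [h1, hcd, h2, ← key y h3, eq_iff_iff, smul_eq_mul]
    have : (-1 : ℝ) ^ (c + d) * ((y - x) ^ d * u y) = (x - y) ^ d * ((-1) ^ c * u y) := by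
      rw [show x - y = (-1) * (y - x) by ring, mul_pow, pow_add]; ring
    rw [this, mul_pos_iff_of_pos_left h5]
  · filter_upwards [eventually_filter_gt ρ x, nhdsWithin_le_nhds hMu, nhdsWithin_le_nhds husign,
      self_mem_nhdsWithin] with y h1 h2 h3 h4
    have h5 : 0 < (y - x) ^ d := pow_pos (sub_pos.2 h4) _
    rw [h1, ← hc, h2, ← key y h3, eq_iff_iff, smul_eq_mul]
    have : (-1 : ℝ) ^ c * ((y - x) ^ d * u y) = (y - x) ^ d * ((-1) ^ c * u y) := by ring
    rw [this, mul_pos_iff_of_pos_left h5]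

/-- The change of sheet `round (Θ / π)` of a continuous argument `Θ` of `M + i S` between `0` and `R`
is the signed count over the zeros `ρ` of `M`, listed decreasingly with multiplicity. -/
lemma counting {Θ r M S : ℝ → ℝ} (hΘ : Continuous Θ) (hr : ∀ ω, 0 < r ω)
    (hM : ∀ ω, M ω = r ω * Real.cos (Θ ω)) (hS : ∀ ω, S ω = r ω * Real.sin (Θ ω))
    {R : ℝ} (hR : 0 < R) (hpos : ∀ ω, R ≤ ω → 0 < M ω) (h0 : 0 < M 0)
    (hMan : ∀ ω, AnalyticAt ℝ M ω) {m : ℕ} {ρ : Fin m → ℝ} (hρ : Antitone ρ)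
    (hρzero : ∀ j, 0 < ρ j ∧ M (ρ j) = 0)
    (hord : ∀ x, 0 ≤ x →
      analyticOrderAt M x = ((Finset.univ.filter fun j => ρ j = x).card : ℕ∞)) :
    (round (Θ 0 / π) : ℝ) - round (Θ R / π) =
      ∑ j : Fin m, (-1 : ℝ) ^ (j : ℕ) * Real.sign (S (ρ j)) := by
  have hIR : ∀ y, R ≤ y → (Finset.univ.filter fun j => y < ρ j) = ∅ := by
    intro y hy
    rw [Finset.filter_eq_empty_iff]
    intro j _ hj
    exact (hpos _ (hy.trans hj.le)).ne' (hρzero j).2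
  have hne0 : ∀ x, 0 ≤ x → ∀ᶠ y in 𝓝[≠] x, M y ≠ 0 := by
    intro x hx
    refine (hMan x).eventually_eq_zero_or_eventually_ne_zero.resolve_left fun h => ?_
    have := analyticOrderAt_eq_top.2 h
    rw [hord x hx] at this
    exact ENat.natCast_ne_top _ this
  have hsign : ∀ x ∈ Set.Icc 0 R, ∀ᶠ y in 𝓝[≠] x,
      0 < (-1) ^ (Finset.univ.filter fun j => y < ρ j).card * M y := by
    intro x hx
    obtain ⟨p, hp1, hp2⟩ := exists_const_of_punctured
      (fun x hx => punctured_sign_const (hMan x) (hord x hx.1)) hx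
      (Set.right_mem_Icc.2 hR.le)
    have : p := by
      have h3 : ∀ᶠ y in 𝓝[>] R,
          (0 < (-1) ^ (Finset.univ.filter fun j => y < ρ j).card * M y) = p :=
        hp2.filter_mono (nhdsWithin_mono _ fun y hy => ne_of_gt hy)
      obtain ⟨y, hy1, hy2⟩ := (h3.and self_mem_nhdsWithin).exists
      rw [← hy1, hIR y (le_of_lt hy2)]
      simpa using hpos y (le_of_lt hy2)
    filter_upwards [hp1] with y hy
    rw [hy]; exact this
  -- `T y` collects the terms beyond `y`; near every `x`, and away from `x` itself, the
  -- difference `round (Θ y / π) - T y` is constant.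
  set T : ℝ → ℝ := fun y => ∑ j ∈ Finset.univ.filter (fun j => y < ρ j),
    (-1 : ℝ) ^ (j : ℕ) * Real.sign (S (ρ j)) with hT
  have hreg : ∀ x, 0 ≤ x → M x ≠ 0 → ∀ᶠ y in 𝓝 x,
      (round (Θ y / π) : ℝ) - T y = (round (Θ x / π) : ℝ) - T x := by
    intro x hx hMx
    have hcos : Real.cos (Θ x) ≠ 0 := fun h => hMx (by rw [hM, h, mul_zero])
    have hIx : (Finset.univ.filter fun j => x ≤ ρ j) = Finset.univ.filter fun j => x < ρ j := by
      ext j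
      simp only [Finset.mem_filter, Finset.mem_univ, true_and]
      refine ⟨fun h => lt_of_le_of_ne h fun h' => hMx (h' ▸ (hρzero j).2), le_of_lt⟩
    have hev : ∀ᶠ y in 𝓝 x,
        (Finset.univ.filter fun j => y < ρ j) = Finset.univ.filter fun j => x < ρ j := by
      have h1 := eventually_filter_lt ρ x
      rw [hIx] at h1
      have h2 := eventually_sup.2 ⟨h1, eventually_filter_gt ρ x⟩
      rw [← nhdsWithin_union, Set.Iio_union_Ioi, eventually_nhdsWithin_iff] at h2
      filter_upwards [h2] with y hy
      by_cases hyx : y = x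
      · rw [hyx]
      · exact hy hyx
    filter_upwards [hev, eventually_round_eq hΘ hcos] with y h1 h2
    simp only [hT, h1, h2]
  have hlow : ∀ x, ∀ i ∈ Finset.univ.filter (fun j => x < ρ j), ∀ j, j ≤ i →
      j ∈ Finset.univ.filter (fun j => x < ρ j) := by
    intro x i hi j hj
    simp only [Finset.mem_filter, Finset.mem_univ, true_and] at hi ⊢
    exact hi.trans_le (hρ hj)
  have hlow' : ∀ x, ∀ i ∈ Finset.univ.filter (fun j => x ≤ ρ j), ∀ j, j ≤ i →
      j ∈ Finset.univ.filter (fun j => x ≤ ρ j) := by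
    intro x i hi j hj
    simp only [Finset.mem_filter, Finset.mem_univ, true_and] at hi ⊢
    exact hi.trans (hρ hj)
  have hloc : ∀ x ∈ Set.Icc 0 R, ∃ c, ∀ᶠ y in 𝓝[≠] x, (round (Θ y / π) : ℝ) - T y = c := by
    intro x hx
    by_cases hMx : M x = 0
    swap
    · exact ⟨_, nhdsWithin_le_nhds (hreg x hx.1 hMx)⟩
    have hcos : Real.cos (Θ x) = 0 := by
      rw [hM] at hMx
      exact (mul_eq_zero.1 hMx).resolve_left (hr x).ne'
    obtain ⟨ε, l, hε, hΘx, hsin⟩ := exists_eq_of_cos_eq_zero hcos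
    have hSx : Real.sign (S x) = ε := by
      rw [hS, hsin]
      rcases hε with rfl | rfl
      · exact Real.sign_of_pos (by linarith [hr x])
      · exact Real.sign_of_neg (by linarith [hr x])
    set c₀ := (Finset.univ.filter fun j => x < ρ j).card with hc₀
    have hTle : ∑ j ∈ Finset.univ.filter (fun j => x ≤ ρ j),
        (-1 : ℝ) ^ (j : ℕ) * Real.sign (S (ρ j)) = T x + ε *
        ((1 - (-1) ^ (Finset.univ.filter fun j => x ≤ ρ j).card) / 2 - (1 - (-1) ^ c₀) / 2) := by
      rw [← sum_neg_one_pow_of_isLowerSet _ (hlow x), ← sum_neg_one_pow_of_isLowerSet _ (hlow' x),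
        filter_le_eq, Finset.sum_union (disjoint_filter_lt_eq ρ x),
        Finset.sum_union (disjoint_filter_lt_eq ρ x), add_sub_cancel_left, Finset.mul_sum]
      congr 1
      refine Finset.sum_congr rfl fun j hj => ?_
      simp only [Finset.mem_filter, Finset.mem_univ, true_and] at hj
      rw [hj, hSx, mul_comm]
    have hTy : ∀ᶠ y in 𝓝[≠] x, T y = T x + ε *
        ((1 - (-1) ^ (Finset.univ.filter fun j => y < ρ j).card) / 2 - (1 - (-1) ^ c₀) / 2) := by
      rw [← Set.Iio_union_Ioi, nhdsWithin_union, eventually_sup]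
      constructor
      · filter_upwards [eventually_filter_lt ρ x] with y hy
        rw [hy, ← hTle]
        simp only [hT, hy]
      · filter_upwards [eventually_filter_gt ρ x] with y hy
        simp only [hT, hy, ← hc₀]; ring
    have hnear : ∀ᶠ y in 𝓝 x, |Θ y - (ε * (π / 2) + 2 * π * l)| < π / 2 := by
      have hc : Continuous fun y => |Θ y - (ε * (π / 2) + 2 * π * l)| := by fun_prop
      refine hc.continuousAt.eventually_lt continuousAt_const ?_
      rw [hΘx, sub_self, abs_zero]; exact Real.pi_div_two_pos
    refine ⟨2 * l - T x + ε * ((1 - (-1) ^ c₀) / 2), ?_⟩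
    filter_upwards [hTy, nhdsWithin_le_nhds hnear, hsign x hx, hne0 x hx.1] with y h1 h2 h3 h4
    have hcy : Real.cos (Θ y) ≠ 0 := fun h => h4 (by rw [hM, h, mul_zero])
    rw [h1, round_near_half hε h2 hcy]
    have : (if 0 < Real.cos (Θ y) then (0 : ℝ) else 1) =
        (1 - (-1) ^ (Finset.univ.filter fun j => y < ρ j).card) / 2 := by
      rw [hM] at h3
      rcases neg_one_pow_eq_or ℝ (Finset.univ.filter fun j => y < ρ j).card with h | h
      · rw [h, one_mul, mul_pos_iff_of_pos_left (hr y)] at h3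
        rw [h, if_pos h3]; norm_num
      · rw [h, neg_one_mul, neg_pos] at h3
        have : ¬ 0 < Real.cos (Θ y) := fun h5 => absurd (mul_pos (hr y) h5) (by linarith)
        rw [h, if_neg this]; norm_num
    rw [this]; ring
  obtain ⟨c, hc1, hc2⟩ := exists_const_of_punctured hloc (Set.left_mem_Icc.2 hR.le)
    (Set.right_mem_Icc.2 hR.le)
  obtain ⟨y, hy1, hy2⟩ := (hc1.and (nhdsWithin_le_nhds (hreg 0 le_rfl h0.ne'))).exists
  obtain ⟨z, hz1, hz2⟩ := (hc2.and (nhdsWithin_le_nhds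
    (hreg R hR.le (hpos R le_rfl).ne'))).exists
  have hT0 : T 0 = ∑ j : Fin m, (-1 : ℝ) ^ (j : ℕ) * Real.sign (S (ρ j)) := by
    simp only [hT]
    rw [Finset.filter_true_of_mem fun j _ => (hρzero j).1]
  have hTR : T R = 0 := by
    simp only [hT]
    rw [hIR R le_rfl, Finset.sum_empty]
  rw [← hT0]
  linarith

/-! ### The argument principle on a right half-disk -/

/-- `θ` is a continuous logarithm of `f` along the imaginary axis and `ψ` one along the arc
`R e^{it}`, `|t| ≤ π/2`; the change of `θ` from `-R` to `R` is the change of `ψ` from `-π/2` to `π/2`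
minus `2πi n`. Equivalently, `f` has winding number `n` along the boundary of the right half-disk of
radius `R`. -/
def HasArgDrop (f : ℂ → ℂ) (R : ℝ) (n : ℕ) : Prop :=
  ∃ θ ψ : ℝ → ℂ, Continuous θ ∧ Continuous ψ ∧ (∀ ω : ℝ, Complex.exp (θ ω) = f (I * ω)) ∧
    (∀ t ∈ Set.Icc (-(π / 2)) (π / 2), Complex.exp (ψ t) = f (R * Complex.exp (t * I))) ∧
    (θ R - ψ (π / 2)) - (θ (-R) - ψ (-(π / 2))) = -(2 * π * I * n)

lemma HasArgDrop.mul {f g : ℂ → ℂ} {R : ℝ} {n k : ℕ} (hf : HasArgDrop f R n)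
    (hg : HasArgDrop g R k) : HasArgDrop (fun s => f s * g s) R (n + k) := by
  obtain ⟨θ, ψ, h1, h2, h3, h4, h5⟩ := hf
  obtain ⟨θ', ψ', h1', h2', h3', h4', h5'⟩ := hg
  refine ⟨fun ω => θ ω + θ' ω, fun t => ψ t + ψ' t, h1.add h1', h2.add h2', fun ω => ?_,
    fun t ht => ?_, ?_⟩
  · rw [Complex.exp_add, h3, h3']
  · rw [Complex.exp_add, h4 t ht, h4' t ht]
  · push_cast; linear_combination h5 + h5'

lemma HasArgDrop.pow {f : ℂ → ℂ} {R : ℝ} {n : ℕ} (hf : HasArgDrop f R n) (k : ℕ) :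
    HasArgDrop (fun s => f s ^ k) R (k * n) := by
  induction k with
  | zero => exact ⟨0, 0, continuous_const, continuous_const, by simp, by simp, by simp⟩
  | succ k ih =>
    have := ih.mul hf
    simpa only [pow_succ, add_mul, one_mul] using this

lemma HasArgDrop.prod {ι : Type*} (Z : Finset ι) {f : ι → ℂ → ℂ} {R : ℝ} {n : ι → ℕ}
    (hf : ∀ a ∈ Z, HasArgDrop (f a) R (n a)) :
    HasArgDrop (fun s => ∏ a ∈ Z, f a s) R (∑ a ∈ Z, n a) := by
  classical
  induction Z using Finset.induction_on with
  | empty => exact ⟨0, 0, continuous_const, continuous_const, by simp, by simp, by simp⟩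
  | insert a Z ha ih =>
    simp only [Finset.prod_insert ha, Finset.sum_insert ha]
    exact (hf a (Finset.mem_insert_self _ _)).mul
      (ih fun b hb => hf b (Finset.mem_insert_of_mem hb))

lemma exp_half_pi : Complex.exp (((π / 2 : ℝ) : ℂ) * I) = I := by
  push_cast; exact Complex.exp_pi_div_two_mul_I

lemma exp_neg_half_pi : Complex.exp (((-(π / 2) : ℝ) : ℂ) * I) = -I := by
  push_cast; rw [neg_mul, Complex.exp_neg, Complex.exp_pi_div_two_mul_I, Complex.inv_I]

/-- A function without zeros in the closed right half-plane has a continuous logarithm there, so both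
contours may use the same one. Precomposing with the retraction `q` onto the closed half-plane makes
the function zero free on all of `ℂ`, where lifting through `exp` applies. -/
lemma hasArgDrop_of_ne_zero {g : ℂ → ℂ} (hg : Continuous g) (hne : ∀ s : ℂ, 0 ≤ s.re → g s ≠ 0)
    {R : ℝ} (hR : 0 ≤ R) : HasArgDrop g R 0 := by
  set q : ℂ → ℂ := fun s => ((max s.re 0 : ℝ) : ℂ) + s.im * I with hq
  have hqc : Continuous q := by
    have : Continuous fun s : ℂ => max s.re 0 := Complex.continuous_re.max continuous_const
    fun_prop
  have hqre : ∀ s, 0 ≤ (q s).re := fun s => by simp [hq]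
  have hqid : ∀ s : ℂ, 0 ≤ s.re → q s = s := fun s hs => by
    simp only [hq, max_eq_left hs]; exact Complex.re_add_im s
  have hsc : IsSimplyConnected (Set.univ : Set ℂ) := by
    have := (convex_univ (𝕜 := ℝ) (E := ℂ)).contractibleSpace Set.univ_nonempty
    exact SimplyConnectedSpace.ofContractible _
  obtain ⟨h, hc, he⟩ := Complex.exists_continuousOn_eqOn_exp_comp
    (X := ℂ) (U := Set.univ) hsc isOpen_univ (g := g ∘ q)
    (hg.comp hqc).continuousOn (by
      rintro ⟨s, -, hs⟩
      exact hne _ (hqre s) hs)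
  rw [continuousOn_univ] at hc
  have he' : ∀ s : ℂ, 0 ≤ s.re → Complex.exp (h s) = g s := fun s hs => by
    have := he (Set.mem_univ s)
    simp only [Function.comp_apply, hqid s hs] at this
    exact this
  refine ⟨fun ω => h (I * ω), fun t => h (R * Complex.exp (t * I)), by fun_prop, by fun_prop,
    fun ω => he' _ (by simp), fun t ht => he' _ ?_, ?_⟩
  · rw [Complex.re_ofReal_mul, Complex.exp_ofReal_mul_I_re]
    exact mul_nonneg hR (Real.cos_nonneg_of_mem_Icc ht)
  · simp only [exp_half_pi, exp_neg_half_pi]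
    push_cast
    rw [mul_comm I (R : ℂ), show I * -(R : ℂ) = R * -I by ring]
    simp

/-- Along the axis `θ = log (a - iω) + πi` is a logarithm of `iω - a`, because `Re (a - iω) > 0`; along
the arc `R e^{it} - a = R e^{it} (1 - a e^{-it} / R)`, whose last factor has positive real part. -/
lemma hasArgDrop_sub {a : ℂ} (ha : 0 < a.re) {R : ℝ} (haR : ‖a‖ < R) :
    HasArgDrop (fun s => s - a) R 1 := by
  have hR : 0 < R := (norm_nonneg a).trans_lt haR
  have hRc : (R : ℂ) ≠ 0 := by exact_mod_cast hR.ne'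
  have hre1 : ∀ ω : ℝ, 0 < (a - I * ω).re := fun ω => by simpa using ha
  have hre2 : ∀ t : ℝ, 0 < (1 - a * Complex.exp (-(t * I)) / R).re := fun t => by
    have h1 : ‖a * Complex.exp (-(t * I)) / R‖ < 1 := by
      rw [norm_div, norm_mul, show -((t : ℂ) * I) = ((-t : ℝ) : ℂ) * I by push_cast; ring,
        Complex.norm_exp_ofReal_mul_I, mul_one, Complex.norm_real, Real.norm_of_nonneg hR.le,
        div_lt_one hR]
      exact haR
    have h2 := (Complex.abs_re_le_norm (a * Complex.exp (-(t * I)) / R)).trans_lt h1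
    rw [abs_lt] at h2
    rw [Complex.sub_re, Complex.one_re]; linarith [h2.2]
  have hne1 : ∀ ω : ℝ, a - I * ω ≠ 0 := fun ω h => by have := hre1 ω; simp [h] at this
  have hne2 : ∀ t : ℝ, 1 - a * Complex.exp (-(t * I)) / R ≠ 0 := fun t h => by
    have := hre2 t; simp [h] at this
  set θ : ℝ → ℂ := fun ω => Complex.log (a - I * ω) + π * I with hθ
  set ψ : ℝ → ℂ := fun t => Complex.log R + t * I +
    Complex.log (1 - a * Complex.exp (-(t * I)) / R) with hψ
  have eθ : ∀ ω : ℝ, Complex.exp (θ ω) = I * ω - a := fun ω => by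
    simp only [hθ]
    rw [Complex.exp_add, Complex.exp_log (hne1 ω), Complex.exp_pi_mul_I]; ring
  have eψ : ∀ t : ℝ, Complex.exp (ψ t) = R * Complex.exp (t * I) - a := fun t => by
    simp only [hψ]
    rw [Complex.exp_add, Complex.exp_add, Complex.exp_log hRc, Complex.exp_log (hne2 t),
      Complex.exp_neg]
    field_simp [Complex.exp_ne_zero]
  -- Two logarithms of the same number differ by `2πi k`; the bounds `|arg| < π/2` on the principal
  -- logarithms confine `2πk` to an open interval of length `2π`.
  have hwin : ∀ (ω t : ℝ), (I * ω : ℂ) = R * Complex.exp (t * I) →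
      ∃ k : ℤ, θ ω - ψ t = k * (2 * π * I) ∧ -t < 2 * π * k ∧ 2 * π * k < 2 * π - t := by
    intro ω t hωt
    have h1 : Complex.exp (θ ω) = Complex.exp (ψ t) := by rw [eθ, eψ, hωt]
    obtain ⟨k, hk⟩ := Complex.exp_eq_exp_iff_exists_int.1 h1
    refine ⟨k, by rw [hk]; ring, ?_⟩
    have h2 := congrArg Complex.im hk
    have h3 := Complex.abs_arg_lt_pi_div_two_iff.2 (Or.inl (hre1 ω))
    have h4 := Complex.abs_arg_lt_pi_div_two_iff.2 (Or.inl (hre2 t))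
    rw [abs_lt] at h3 h4
    simp only [hθ, hψ, Complex.add_im, Complex.log_im, Complex.arg_ofReal_of_nonneg hR.le,
      Complex.mul_im, Complex.ofReal_im, Complex.ofReal_re, Complex.I_re, Complex.I_im] at h2
    simp at h2
    constructor <;> nlinarith [h3.1, h3.2, h4.1, h4.2]
  have hπ := Real.pi_pos
  refine ⟨θ, ψ, ?_, ?_, eθ, fun t _ => eψ t, ?_⟩
  · refine Continuous.add (Continuous.clog (by fun_prop) fun ω => Or.inl (hre1 ω)) continuous_const
  · refine Continuous.add (by fun_prop)
      (Continuous.clog (by fun_prop) fun t => Or.inl (hre2 t))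
  · obtain ⟨k, hk, hk1, hk2⟩ := hwin R (π / 2) (by rw [exp_half_pi]; ring)
    obtain ⟨l, hl, hl1, hl2⟩ := hwin (-R) (-(π / 2)) (by rw [exp_neg_half_pi]; push_cast; ring)
    have hk0 : k = 0 := by
      have h1 : (-1 : ℝ) < k := by nlinarith
      have h2 : (k : ℝ) < 1 := by nlinarith
      have h1' : -1 < k := by exact_mod_cast h1
      have h2' : k < 1 := by exact_mod_cast h2
      omega
    have hl0 : l = 1 := by
      have h1 : (0 : ℝ) < l := by nlinarith
      have h2 : (l : ℝ) < 2 := by nlinarith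
      have h1' : 0 < l := by exact_mod_cast h1
      have h2' : l < 2 := by exact_mod_cast h2
      omega
    rw [hk, hl, hk0, hl0]; push_cast; ring

/-- The quotient `f s / (s - a) ^ d` is entire after filling in the value at `a`. -/
lemma exists_factor_single {f : ℂ → ℂ} (hf : Differentiable ℂ f) {a : ℂ} {d : ℕ}
    (hd : analyticOrderAt f a = d) :
    ∃ g : ℂ → ℂ, Differentiable ℂ g ∧ (∀ s, f s = (s - a) ^ d * g s) ∧ g a ≠ 0 := by
  obtain ⟨u, hu, hua, hfu⟩ := ((hf.analyticAt a).analyticOrderAt_eq_natCast).1 hd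
  classical
  set g : ℂ → ℂ := fun s => if s = a then u a else f s / (s - a) ^ d with hg
  have hga : g a = u a := by simp [hg]
  have hgu : g =ᶠ[𝓝 a] u := by
    filter_upwards [hfu] with s hs
    by_cases h : s = a
    · rw [h, hga]
    · have : (s - a) ^ d ≠ 0 := pow_ne_zero _ (sub_ne_zero.2 h)
      simp only [hg, if_neg h, hs, smul_eq_mul]
      field_simp
  refine ⟨g, fun s => ?_, fun s => ?_, by rwa [hga]⟩
  · by_cases h : s = a
    · rw [h]; exact hgu.differentiableAt_iff.2 hu.differentiableAt
    · have h1 : g =ᶠ[𝓝 s] fun s => f s / (s - a) ^ d := by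
        filter_upwards [isOpen_ne.mem_nhds h] with z hz
        simp only [hg, if_neg hz]
      refine h1.differentiableAt_iff.2 (DifferentiableAt.div (hf s) (by fun_prop) ?_)
      exact pow_ne_zero _ (sub_ne_zero.2 h)
  · by_cases h : s = a
    · rw [h, hga]; simpa using hfu.self_of_nhds
    · have : (s - a) ^ d ≠ 0 := pow_ne_zero _ (sub_ne_zero.2 h)
      simp only [hg, if_neg h]
      field_simp

lemma exists_factor (Z : Finset ℂ) {f : ℂ → ℂ} (hf : Differentiable ℂ f)
    (hZ : ∀ a ∈ Z, analyticOrderAt f a ≠ ⊤) :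
    ∃ g : ℂ → ℂ, Differentiable ℂ g ∧
      (∀ s, f s = (∏ a ∈ Z, (s - a) ^ analyticOrderNatAt f a) * g s) ∧ ∀ a ∈ Z, g a ≠ 0 := by
  classical
  induction Z using Finset.induction_on with
  | empty => exact ⟨f, hf, by simp, by simp⟩
  | insert a Z ha ih =>
    obtain ⟨g, hg, hfg, hgZ⟩ := ih fun b hb => hZ b (Finset.mem_insert_of_mem hb)
    have hord : analyticOrderAt g a = analyticOrderNatAt f a := by
      rw [Nat.cast_analyticOrderNatAt (hZ a (Finset.mem_insert_self _ _))]
      have hp : AnalyticAt ℂ (fun s => ∏ b ∈ Z, (s - b) ^ analyticOrderNatAt f b) a := by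
        have : Differentiable ℂ (fun s => ∏ b ∈ Z, (s - b) ^ analyticOrderNatAt f b) := by
          fun_prop
        exact this.analyticAt a
      have h1 : f = (fun s => ∏ b ∈ Z, (s - b) ^ analyticOrderNatAt f b) * g := funext hfg
      have h2 : analyticOrderAt f a = analyticOrderAt
          ((fun s => ∏ b ∈ Z, (s - b) ^ analyticOrderNatAt f b) * g) a := congrArg (analyticOrderAt · a) h1
      rw [h2, analyticOrderAt_mul hp (hg.analyticAt a), hp.analyticOrderAt_eq_zero.2, zero_add]
      refine Finset.prod_ne_zero_iff.2 fun b hb => pow_ne_zero _ (sub_ne_zero.2 ?_)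
      rintro rfl; exact ha hb
    obtain ⟨k, hk, hgk, hka⟩ := exists_factor_single hg hord
    refine ⟨k, hk, fun s => ?_, fun b hb => ?_⟩
    · rw [hfg, hgk, Finset.prod_insert ha]; ring
    · rcases Finset.mem_insert.1 hb with rfl | hb
      · exact hka
      · intro h0
        apply hgZ b hb
        rw [hgk, h0, mul_zero]

/-- The argument principle for the right half-disk: the winding number is the number of zeros in the
open right half-plane, counted with multiplicity, as soon as all of them have modulus below `R`. -/
lemma hasArgDrop_of_zeros {f : ℂ → ℂ} (hf : Differentiable ℂ f) (hf0 : ∃ s, f s ≠ 0)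
    (him : ∀ ω : ℝ, f (I * ω) ≠ 0) (hfin : {s : ℂ | 0 < s.re ∧ f s = 0}.Finite) {R : ℝ}
    (hR : ∀ s : ℂ, 0 ≤ s.re → f s = 0 → ‖s‖ < R) (hR0 : 0 ≤ R) :
    HasArgDrop f R (∑ s ∈ hfin.toFinset, zeroOrder f s) := by
  have htop : ∀ a, analyticOrderAt f a ≠ ⊤ := by
    intro a ha
    obtain ⟨s, hs⟩ := hf0
    have hfa : AnalyticOnNhd ℂ f Set.univ := fun z _ => hf.analyticAt z
    exact hs (hfa.eqOn_zero_of_preconnected_of_eventuallyEq_zero isPreconnected_univ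
      (Set.mem_univ a) (analyticOrderAt_eq_top.1 ha) (Set.mem_univ s))
  obtain ⟨g, hg, hfg, hgZ⟩ := exists_factor hfin.toFinset hf fun a _ => htop a
  have hne : ∀ s : ℂ, 0 ≤ s.re → g s ≠ 0 := by
    intro s hs hgs
    have hfs : f s = 0 := by rw [hfg, hgs, mul_zero]
    rcases hs.eq_or_lt with h | h
    · apply him s.im
      have : I * (s.im : ℂ) = s := by apply Complex.ext <;> simp [← h]
      rwa [this]
    · exact hgZ s (by simpa using ⟨h, hfs⟩) hgs
  have h1 := (HasArgDrop.prod hfin.toFinset (R := R) (f := fun a s => (s - a) ^ analyticOrderNatAt f a)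
    (n := fun a => analyticOrderNatAt f a * 1) fun a ha => by
      simp only [Set.Finite.mem_toFinset, Set.mem_ofPred_eq] at ha
      exact (hasArgDrop_sub ha.1 (hR a ha.1.le ha.2)).pow _).mul
    (hasArgDrop_of_ne_zero hg.continuous hne hR0)
  have h2 : ∑ s ∈ hfin.toFinset, zeroOrder f s =
      ∑ a ∈ hfin.toFinset, analyticOrderNatAt f a * 1 + 0 := by
    rw [add_zero]
    refine Finset.sum_congr rfl fun a _ => ?_
    have := zeroOrder_eq (hf.analyticAt a) (htop a)
    rw [mul_one, analyticOrderNatAt, ← this]; rfl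
  rw [h2]
  exact (congrArg (fun F => HasArgDrop F R _) (funext hfg)).mpr h1

/-- Two continuous logarithms of the same function on a connected set differ by a constant, since their
difference takes values in the discrete set `2πi ℤ`. -/
lemma log_sub_log_const {u v : ℝ → ℂ} {s : Set ℝ} (hs : IsPreconnected s)
    (hu : ContinuousOn u s) (hv : ContinuousOn v s)
    (h : ∀ x ∈ s, Complex.exp (u x) = Complex.exp (v x)) {x y : ℝ} (hx : x ∈ s) (hy : y ∈ s) :
    u x - v x = u y - v y := by
  have hmem : ∀ x ∈ s, ∃ k : ℤ, u x - v x = k * (2 * π * I) := by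
    intro x hx
    obtain ⟨k, hk⟩ := Complex.exp_eq_exp_iff_exists_int.1 (h x hx)
    exact ⟨k, by rw [hk]; ring⟩
  have hint : ∀ x ∈ s, ∃ k : ℤ, (k : ℝ) = (u x - v x).im / (2 * π) := by
    intro x hx
    obtain ⟨k, hk⟩ := hmem x hx
    exact ⟨k, by rw [hk]; simp⟩
  have hre : ∀ x ∈ s, (u x - v x).re = 0 := by
    intro x hx
    obtain ⟨k, hk⟩ := hmem x hx
    rw [hk]; simp
  have hc : ContinuousOn (fun x => (u x - v x).im / (2 * π)) s :=
    (Complex.continuous_im.comp_continuousOn (hu.sub hv)).div_const _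
  have hconst : (u x - v x).im / (2 * π) = (u y - v y).im / (2 * π) :=
    hs.constant_of_mapsTo Int.isClosedEmbedding_coe_real.isInducing.isDiscrete_range hc hint hx hy
  refine Complex.ext (by rw [hre x hx, hre y hy]) ?_
  exact (div_left_inj' (by positivity)).1 hconst

/-! ### The truncated Laplace transform -/

lemma norm_exp_neg_mul_le_one {s : ℂ} (hs : 0 ≤ s.re) {ν : ℝ} (hν : 0 ≤ ν) :
    ‖Complex.exp (-s * ν)‖ ≤ 1 := by
  rw [Complex.norm_exp, Real.exp_le_one_iff]
  simp only [Complex.mul_re, Complex.neg_re, Complex.neg_im, Complex.ofReal_re, Complex.ofReal_im]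
  nlinarith [mul_nonneg hs hν]

lemma differentiable_laplace {τ : ℝ} (hτ : 0 < τ) {N : ℝ → ℝ}
    (hN : ContinuousOn N (Set.Icc 0 τ)) :
    Differentiable ℂ fun s : ℂ => ∫ ν in (0 : ℝ)..τ, (N ν : ℂ) * Complex.exp (-s * ν) := by
  intro s₀
  obtain ⟨C, hC⟩ := isCompact_Icc.exists_bound_of_continuousOn hN
  have hcont : ∀ s : ℂ, ContinuousOn (fun ν : ℝ => (N ν : ℂ) * Complex.exp (-s * ν))
      (Set.Icc 0 τ) := fun s =>
    (Complex.continuous_ofReal.comp_continuousOn hN).mul (by fun_prop)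
  have hcont' : ContinuousOn (fun ν : ℝ => (N ν : ℂ) * (Complex.exp (-s₀ * ν) * (-1 * ν)))
      (Set.Icc 0 τ) :=
    (Complex.continuous_ofReal.comp_continuousOn hN).mul (by fun_prop)
  have hsub : Set.uIoc 0 τ ⊆ Set.Icc 0 τ := by
    rw [Set.uIoc_of_le hτ.le]; exact Set.Ioc_subset_Icc_self
  have hmeas : MeasurableSet (Set.uIoc 0 τ) := measurableSet_uIoc
  refine (intervalIntegral.hasDerivAt_integral_of_dominated_loc_of_deriv_le
    (F := fun (s : ℂ) (ν : ℝ) => (N ν : ℂ) * Complex.exp (-s * ν))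
    (F' := fun (s : ℂ) (ν : ℝ) => (N ν : ℂ) * (Complex.exp (-s * ν) * (-1 * ν)))
    (x₀ := s₀) (s := Metric.ball s₀ 1) (bound := fun _ => C * (Real.exp ((‖s₀‖ + 1) * τ) * τ))
    (Metric.ball_mem_nhds _ one_pos) ?_ ?_ ?_ ?_ ?_ ?_).2.differentiableAt
  · exact Eventually.of_forall fun s =>
      ((hcont s).mono hsub).aestronglyMeasurable hmeas
  · refine ContinuousOn.intervalIntegrable ?_
    rw [Set.uIcc_of_le hτ.le]; exact hcont s₀
  · exact (hcont'.mono hsub).aestronglyMeasurable hmeas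
  · refine Eventually.of_forall fun ν hν s hs => ?_
    have hν' := hsub hν
    have hs' : ‖s‖ ≤ ‖s₀‖ + 1 := by
      have h1 : ‖s - s₀‖ < 1 := by simpa [dist_eq_norm] using hs
      have h2 := norm_le_norm_add_norm_sub' s s₀
      linarith
    have h1 : ‖(N ν : ℂ)‖ ≤ C := by rw [Complex.norm_real]; exact hC ν hν'
    have h2 : ‖Complex.exp (-s * ν)‖ ≤ Real.exp ((‖s₀‖ + 1) * τ) := by
      refine (Complex.norm_exp_le_exp_norm _).trans (Real.exp_le_exp.2 ?_)
      rw [norm_mul, norm_neg, Complex.norm_real, Real.norm_of_nonneg hν'.1]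
      exact mul_le_mul hs' hν'.2 hν'.1 (by positivity)
    have h3 : ‖(-1 * ν : ℂ)‖ ≤ τ := by
      rw [neg_one_mul, norm_neg, Complex.norm_real, Real.norm_of_nonneg hν'.1]; exact hν'.2
    rw [norm_mul, norm_mul]
    have hC0 : 0 ≤ C := (norm_nonneg _).trans h1
    gcongr
  · exact intervalIntegrable_const
  · refine Eventually.of_forall fun ν hν s hs => ?_
    refine HasDerivAt.const_mul _ (HasDerivAt.cexp ?_)
    exact (hasDerivAt_id s).neg.mul_const (ν : ℂ)

/-- Integration by parts: the truncated Laplace transform of a polynomial is `O(1 / ‖s‖)` uniformly on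
the closed right half-plane. -/
lemma norm_laplace_polynomial_le {τ : ℝ} (hτ : 0 < τ) (p : Polynomial ℝ) :
    ∃ C, ∀ s : ℂ, 0 ≤ s.re →
      ‖s‖ * ‖∫ ν in (0 : ℝ)..τ, ((p.eval ν : ℝ) : ℂ) * Complex.exp (-s * ν)‖ ≤ C := by
  obtain ⟨C, hC⟩ := (isCompact_Icc (a := (0 : ℝ)) (b := τ)).exists_bound_of_continuousOn
    p.derivative.continuous.continuousOn
  refine ⟨|p.eval 0| + |p.eval τ| + C * τ, fun s hs => ?_⟩
  have hcp : Continuous fun ν : ℝ => ((p.eval ν : ℝ) : ℂ) :=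
    Complex.continuous_ofReal.comp p.continuous
  have hcp' : Continuous fun ν : ℝ => ((p.derivative.eval ν : ℝ) : ℂ) :=
    Complex.continuous_ofReal.comp p.derivative.continuous
  have hd : ∀ ν : ℝ, HasDerivAt (fun ν : ℝ => -(((p.eval ν : ℝ) : ℂ) * Complex.exp (-s * ν)))
      (s * (((p.eval ν : ℝ) : ℂ) * Complex.exp (-s * ν)) -
        ((p.derivative.eval ν : ℝ) : ℂ) * Complex.exp (-s * ν)) ν := by
    intro ν
    have h1 : HasDerivAt (fun ν : ℝ => ((p.eval ν : ℝ) : ℂ)) (p.derivative.eval ν : ℝ) ν :=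
      (p.hasDerivAt ν).ofReal_comp
    have h2 : HasDerivAt (fun ν : ℝ => Complex.exp (-s * ν))
        (Complex.exp (-s * ν) * (-s * 1)) ν :=
      ((hasDerivAt_id ν).ofReal_comp.const_mul (-s)).cexp
    refine (h1.mul h2).neg.congr_deriv ?_
    ring
  have hint := intervalIntegral.integral_eq_sub_of_hasDerivAt (a := 0) (b := τ)
    (fun ν _ => hd ν) (Continuous.intervalIntegrable (by fun_prop) _ _)
  rw [intervalIntegral.integral_sub (Continuous.intervalIntegrable (by fun_prop) _ _)
    (Continuous.intervalIntegrable (by fun_prop) _ _), intervalIntegral.integral_const_mul] at hint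
  have hD : ‖∫ ν in (0 : ℝ)..τ, ((p.derivative.eval ν : ℝ) : ℂ) * Complex.exp (-s * ν)‖ ≤ C * τ := by
    have := intervalIntegral.norm_integral_le_of_norm_le_const (a := 0) (b := τ) (C := C)
      (f := fun ν : ℝ => ((p.derivative.eval ν : ℝ) : ℂ) * Complex.exp (-s * ν)) (by
        intro ν hν
        rw [Set.uIoc_of_le hτ.le] at hν
        have h1 : ‖((p.derivative.eval ν : ℝ) : ℂ)‖ ≤ C := by
          rw [Complex.norm_real]; exact hC ν (Set.Ioc_subset_Icc_self hν)
        rw [norm_mul]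
        calc _ ≤ C * 1 := mul_le_mul h1 (norm_exp_neg_mul_le_one hs hν.1.le) (norm_nonneg _)
              ((norm_nonneg _).trans h1)
          _ = C := mul_one C)
    simpa [abs_of_pos hτ] using this
  rw [← norm_mul]
  have heq : s * ∫ ν in (0 : ℝ)..τ, ((p.eval ν : ℝ) : ℂ) * Complex.exp (-s * ν) =
      ((p.eval 0 : ℝ) : ℂ) - ((p.eval τ : ℝ) : ℂ) * Complex.exp (-s * τ) +
        ∫ ν in (0 : ℝ)..τ, ((p.derivative.eval ν : ℝ) : ℂ) * Complex.exp (-s * ν) := by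
    simp only [Complex.ofReal_zero, mul_zero, Complex.exp_zero, mul_one] at hint
    linear_combination hint
  rw [heq]
  have h5 : ‖((p.eval τ : ℝ) : ℂ) * Complex.exp (-s * τ)‖ ≤ |p.eval τ| := by
    rw [norm_mul, Complex.norm_real]
    exact mul_le_of_le_one_right (norm_nonneg _) (norm_exp_neg_mul_le_one hs hτ.le)
  have h6 : ‖((p.eval 0 : ℝ) : ℂ)‖ = |p.eval 0| := Complex.norm_real _
  calc _ ≤ ‖((p.eval 0 : ℝ) : ℂ)‖ + ‖((p.eval τ : ℝ) : ℂ) * Complex.exp (-s * τ)‖ + C * τ :=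
        (norm_add_le _ _).trans (add_le_add (norm_sub_le _ _) hD)
    _ ≤ _ := by rw [h6]; gcongr

/-- A Riemann–Lebesgue lemma, uniform on the closed right half-plane. -/
lemma laplace_small {τ : ℝ} (hτ : 0 < τ) {N : ℝ → ℝ} (hN : ContinuousOn N (Set.Icc 0 τ))
    {ε : ℝ} (hε : 0 < ε) :
    ∃ R, 0 < R ∧ ∀ s : ℂ, 0 ≤ s.re → R ≤ ‖s‖ →
      ‖∫ ν in (0 : ℝ)..τ, (N ν : ℂ) * Complex.exp (-s * ν)‖ < ε := by
  obtain ⟨p, hp⟩ := exists_polynomial_near_of_continuousOn 0 τ N hN (ε / (2 * τ)) (by positivity)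
  obtain ⟨C, hC⟩ := norm_laplace_polynomial_le hτ p
  refine ⟨max 1 (2 * C / ε + 1), by positivity, fun s hs hRs => ?_⟩
  have hs0 : 0 < ‖s‖ := lt_of_lt_of_le (by positivity) hRs
  have hcp : Continuous fun ν : ℝ => ((p.eval ν : ℝ) : ℂ) :=
    Complex.continuous_ofReal.comp p.continuous
  have h1 : ‖∫ ν in (0 : ℝ)..τ, ((p.eval ν : ℝ) : ℂ) * Complex.exp (-s * ν)‖ < ε / 2 := by
    have h2 : 2 * C / ε < ‖s‖ := by linarith [le_max_right 1 (2 * C / ε + 1)]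
    rw [div_lt_iff₀ hε] at h2
    have h3 := hC s hs
    by_contra! h4
    nlinarith [mul_le_mul_of_nonneg_left h4 hs0.le]
  have hdiff : (∫ ν in (0 : ℝ)..τ, (N ν : ℂ) * Complex.exp (-s * ν)) =
      (∫ ν in (0 : ℝ)..τ, ((p.eval ν : ℝ) : ℂ) * Complex.exp (-s * ν)) -
      ∫ ν in (0 : ℝ)..τ, ((p.eval ν - N ν : ℝ) : ℂ) * Complex.exp (-s * ν) := by
    rw [← intervalIntegral.integral_sub]
    · refine intervalIntegral.integral_congr fun ν _ => ?_
      push_cast; ring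
    · exact Continuous.intervalIntegrable (by fun_prop) _ _
    · refine ContinuousOn.intervalIntegrable ?_
      rw [Set.uIcc_of_le hτ.le]
      exact (Complex.continuous_ofReal.comp_continuousOn (p.continuous.continuousOn.sub hN)).mul
        (by fun_prop)
  have h2 : ‖∫ ν in (0 : ℝ)..τ, ((p.eval ν - N ν : ℝ) : ℂ) * Complex.exp (-s * ν)‖ ≤ ε / 2 := by
    have := intervalIntegral.norm_integral_le_of_norm_le_const (a := 0) (b := τ)
      (C := ε / (2 * τ))
      (f := fun ν : ℝ => ((p.eval ν - N ν : ℝ) : ℂ) * Complex.exp (-s * ν)) (by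
        intro ν hν
        rw [Set.uIoc_of_le hτ.le] at hν
        have h1 : ‖((p.eval ν - N ν : ℝ) : ℂ)‖ ≤ ε / (2 * τ) := by
          rw [Complex.norm_real]; exact (hp ν (Set.Ioc_subset_Icc_self hν)).le
        rw [norm_mul]
        calc _ ≤ ε / (2 * τ) * 1 := mul_le_mul h1 (norm_exp_neg_mul_le_one hs hν.1.le)
              (norm_nonneg _) ((norm_nonneg _).trans h1)
          _ = _ := mul_one _)
    refine this.trans (le_of_eq ?_)
    rw [sub_zero, abs_of_pos hτ]; field_simp
  rw [hdiff]
  calc _ ≤ _ := norm_sub_le _ _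
    _ < ε := by linarith

/-- Infinitely many zeros in a bounded set would accumulate, against the identity theorem. -/
lemma finite_zeros {f : ℂ → ℂ} (hf : Differentiable ℂ f) (hf0 : ∃ s, f s ≠ 0) {R : ℝ}
    (hR : ∀ s : ℂ, 0 ≤ s.re → f s = 0 → ‖s‖ < R) : {s : ℂ | 0 < s.re ∧ f s = 0}.Finite := by
  by_contra hinf
  obtain ⟨x, -, hx⟩ := Set.Infinite.exists_accPt_of_subset_isCompact hinf
    (isCompact_closedBall (0 : ℂ) R) (fun s hs => by
      simpa using (hR s hs.1.le hs.2).le)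
  have hfr : ∃ᶠ y in 𝓝[≠] x, f y = (fun _ => (0 : ℂ)) y :=
    (accPt_iff_frequently_nhdsNE.1 hx).mono fun y hy => hy.2
  have hfa : AnalyticOnNhd ℂ f Set.univ := fun z _ => hf.analyticAt z
  obtain ⟨s, hs⟩ := hf0
  exact hs (congrFun (hfa.eq_of_frequently_eq (fun z _ => analyticAt_const) hfr) s)

/-! ### The root count -/

lemma charFun_conj {τ ξ : ℝ} {N : ℝ → ℝ} {Δ : ℂ → ℂ}
    (hΔ : ∀ s : ℂ, Δ s = 1 - (ξ : ℂ) * Complex.exp (-s * τ)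
      - ∫ ν in (0:ℝ)..τ, (N ν : ℂ) * Complex.exp (-s * ν)) (s : ℂ) :
    Δ (starRingEnd ℂ s) = starRingEnd ℂ (Δ s) := by
  have h : ∀ t : ℝ, Complex.exp (-(starRingEnd ℂ s) * t) =
      starRingEnd ℂ (Complex.exp (-s * t)) := fun t => by
    rw [← Complex.exp_conj]; simp
  rw [hΔ, hΔ, map_sub, map_sub, map_one, map_mul, Complex.conj_ofReal, h]
  simp only [intervalIntegral, map_sub, ← integral_conj]
  simp only [h, map_mul, Complex.conj_ofReal]

theorem stmt_8 (τ ξ : ℝ) (hτ : 0 < τ) (hξ : |ξ| < 1) (N : ℝ → ℝ)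
    (hN : ContinuousOn N (Set.Icc 0 τ))
    (Δ : ℂ → ℂ)
    (hΔ : ∀ s : ℂ, Δ s = 1 - (ξ : ℂ) * Complex.exp (-s * τ)
      - ∫ ν in (0:ℝ)..τ, (N ν : ℂ) * Complex.exp (-s * ν))
    (M S : ℝ → ℝ)
    (hM : ∀ ω : ℝ, M ω = (Δ (Complex.I * ω)).re)
    (hS : ∀ ω : ℝ, S ω = (Δ (Complex.I * ω)).im)
    -- `Δ` has no roots on the imaginary axis
    (hnoim : ∀ ω : ℝ, Δ (Complex.I * ω) ≠ 0)
    -- condition `∫₀^τ N(ν) dν < 1 - ξ`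
    (hint : (∫ ν in (0:ℝ)..τ, N ν) < 1 - ξ)
    -- `ρ₁ ≥ ρ₂ ≥ … ≥ ρ_m > 0` are the positive zeros of `M`, repeated according to
    -- their multiplicities and ordered decreasingly
    (m : ℕ) (ρ : Fin m → ℝ)
    (hρdec : Antitone ρ)
    (hρzero : ∀ j : Fin m, 0 < ρ j ∧ M (ρ j) = 0)
    (hρmult : ∀ r : ℝ, 0 < r → M r = 0 →
      ({j : Fin m | ρ j = r} : Set (Fin m)).ncard = zeroOrder M r) :
    -- the number of roots of `Δ` in the open right half-plane, counted with multiplicity,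
    -- equals `Γ = Σ_{j=1}^m (-1)^{j-1} sign(S(ρ_j))`
    ∃ hfin : {s : ℂ | 0 < s.re ∧ Δ s = 0}.Finite,
      ((∑ s ∈ hfin.toFinset, zeroOrder Δ s : ℕ) : ℝ) =
        ∑ j : Fin m, (-1 : ℝ) ^ (j : ℕ) * Real.sign (S (ρ j)) := by
  have hdiff : Differentiable ℂ Δ := by
    rw [show Δ = _ from funext hΔ]
    exact Differentiable.sub (by fun_prop) (differentiable_laplace hτ hN)
  obtain ⟨R, hR, hsmall⟩ := laplace_small hτ hN (sub_pos.2 hξ)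
  have hre : ∀ s : ℂ, 0 ≤ s.re → R ≤ ‖s‖ → 0 < (Δ s).re := by
    intro s hs hRs
    have h1 : ‖(ξ : ℂ) * Complex.exp (-s * τ)‖ ≤ |ξ| := by
      rw [norm_mul, Complex.norm_real]
      exact mul_le_of_le_one_right (norm_nonneg _) (norm_exp_neg_mul_le_one hs hτ.le)
    have h2 := (Complex.re_le_norm _).trans h1
    have h3 := (Complex.re_le_norm _).trans_lt (hsmall s hs hRs)
    rw [hΔ, Complex.sub_re, Complex.sub_re, Complex.one_re]
    linarith
  have hzero : ∀ s : ℂ, 0 ≤ s.re → Δ s = 0 → ‖s‖ < R := by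
    intro s hs h0
    by_contra! h
    have := hre s hs h
    simp [h0] at this
  have hex : ∃ s, Δ s ≠ 0 := ⟨_, hnoim 0⟩
  have hfin := finite_zeros hdiff hex hzero
  refine ⟨hfin, ?_⟩
  obtain ⟨θ, ψ, hθc, hψc, hθ, hψ, hdrop⟩ := hasArgDrop_of_zeros hdiff hex hnoim hfin hzero hR.le
  set n := ∑ s ∈ hfin.toFinset, zeroOrder Δ s with hn
  have hconj := charFun_conj hΔ
  have hM0 : 0 < M 0 := by
    have : Δ (I * (0 : ℝ)) = ((1 - ξ - ∫ ν in (0:ℝ)..τ, N ν : ℝ) : ℂ) := by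
      rw [hΔ]
      simp [intervalIntegral.integral_ofReal]
    rw [hM, this, Complex.ofReal_re]; linarith
  have hMR : ∀ ω, R ≤ ω → 0 < M ω := by
    intro ω hω
    rw [hM]
    refine hre _ (by simp) ?_
    rw [norm_mul, Complex.norm_I, one_mul, Complex.norm_real]
    exact hω.trans (le_abs_self _)
  have harc : ∀ t ∈ Set.Icc (-(π / 2)) (π / 2), 0 < (Δ (R * Complex.exp (t * I))).re := by
    intro t ht
    refine hre _ ?_ ?_
    · rw [Complex.re_ofReal_mul, Complex.exp_ofReal_mul_I_re]
      exact mul_nonneg hR.le (Real.cos_nonneg_of_mem_Icc ht)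
    · rw [norm_mul, Complex.norm_exp_ofReal_mul_I, mul_one, Complex.norm_real]
      exact le_abs_self _
  have hle : -(π / 2) ≤ π / 2 := by linarith [Real.pi_pos]
  -- On the arc `Δ` stays in the half-plane `Re > 0`, where the principal logarithm is continuous.
  have hψlog := log_sub_log_const (u := ψ)
    (v := fun t : ℝ => Complex.log (Δ (R * Complex.exp (t * I)))) isPreconnected_Icc
    hψc.continuousOn
    (ContinuousOn.clog (hdiff.continuous.comp (by fun_prop)).continuousOn
      fun t ht => Or.inl (harc t ht))
    (fun t ht => by
      rw [hψ t ht, Complex.exp_log]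
      intro h; have := harc t ht; simp [h] at this)
    (Set.right_mem_Icc.2 hle) (Set.left_mem_Icc.2 hle)
  simp only [exp_half_pi, exp_neg_half_pi] at hψlog
  have hRI : 0 < (Δ (R * I)).re := by
    have := harc _ (Set.right_mem_Icc.2 hle); rwa [exp_half_pi] at this
  set φ := (Δ (R * I)).arg with hφ
  have hφlt : |φ| < π / 2 := Complex.abs_arg_lt_pi_div_two_iff.2 (Or.inl hRI)
  have hlogneg : Complex.log (Δ (R * -I)) = starRingEnd ℂ (Complex.log (Δ (R * I))) := by
    have : (R : ℂ) * -I = starRingEnd ℂ (R * I) := by simp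
    rw [this, hconj, Complex.log_conj]
    intro h
    rw [abs_lt] at hφlt
    linarith [hφlt.2, Real.pi_pos, h.symm.trans hφ.symm]
  -- `ω ↦ conj (θ (-ω))` is another continuous logarithm of `ω ↦ Δ (iω)`.
  have hθlog := log_sub_log_const (u := θ) (v := fun ω => starRingEnd ℂ (θ (-ω)))
    isPreconnected_univ hθc.continuousOn
    (Complex.continuous_conj.comp (hθc.comp continuous_neg)).continuousOn
    (fun ω _ => by
      rw [Complex.exp_conj, hθ, hθ, ← hconj]; congr 1; simp)
    (Set.mem_univ R) (Set.mem_univ 0)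
  -- The arc contributes `2 φ` and the axis twice its upper half, by conjugation symmetry.
  have hend : (θ R).im = (θ 0).im + φ - π * n := by
    have e1 := congrArg Complex.im hdrop
    have e2 := congrArg Complex.im hψlog
    have e3 := congrArg Complex.im hθlog
    rw [hlogneg] at e2
    simp [Complex.log_im, ← hφ] at e1 e2 e3
    linarith
  have hS0 : S 0 = 0 := by
    have := congrArg Complex.im (hconj 0)
    rw [hS]
    simp at this ⊢
    linarith
  have hSθ : ∀ ω, S ω = Real.exp (θ ω).re * Real.sin (θ ω).im := fun ω => by
    rw [hS, ← hθ, Complex.exp_im]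
  have hMθ : ∀ ω, M ω = Real.exp (θ ω).re * Real.cos (θ ω).im := fun ω => by
    rw [hM, ← hθ, Complex.exp_re]
  have hMan : ∀ ω, AnalyticAt ℝ M ω := by
    intro ω
    have h1 : AnalyticAt ℂ (fun z => Δ (I * z)) (ω : ℂ) := by
      have : Differentiable ℂ fun z => Δ (I * z) := hdiff.comp (by fun_prop)
      exact this.analyticAt _
    rw [show M = fun ω : ℝ => (Δ (I * ω)).re from funext hM]
    exact h1.re_ofReal
  have hMtop : ∀ x, analyticOrderAt M x ≠ ⊤ := by
    intro a ha
    have hfa : AnalyticOnNhd ℝ M Set.univ := fun z _ => hMan z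
    exact hM0.ne' (hfa.eqOn_zero_of_preconnected_of_eventuallyEq_zero isPreconnected_univ
      (Set.mem_univ a) (analyticOrderAt_eq_top.1 ha) (Set.mem_univ 0))
  have hord : ∀ x, 0 ≤ x →
      analyticOrderAt M x = ((Finset.univ.filter fun j => ρ j = x).card : ℕ∞) := by
    intro x hx
    by_cases hMx : M x = 0
    · have hx0 : 0 < x := lt_of_le_of_ne hx (by rintro rfl; exact hM0.ne' hMx)
      rw [← zeroOrder_eq (hMan x) (hMtop x), ← hρmult x hx0 hMx, Set.ncard_eq_toFinset_card']
      congr 2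
      ext j; simp
    · rw [(hMan x).analyticOrderAt_eq_zero.2 hMx, Finset.card_eq_zero.2, Nat.cast_zero]
      rw [Finset.filter_eq_empty_iff]
      rintro j - rfl
      exact hMx (hρzero j).2
  rw [← counting (Complex.continuous_im.comp hθc) (fun ω => Real.exp_pos (θ ω).re) hMθ hSθ hR hMR
    hM0 hMan hρdec hρzero hord]
  obtain ⟨k, hk⟩ : ∃ k : ℤ, (k : ℝ) * π = (θ 0).im := by
    rw [← Real.sin_eq_zero_iff]
    exact (mul_eq_zero.1 ((hSθ 0).symm.trans hS0)).resolve_left (Real.exp_pos _).ne'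
  have hπ := Real.pi_pos
  have hr0 : round ((Complex.im ∘ θ) 0 / π) = k := by
    rw [Function.comp_apply, ← hk, mul_div_cancel_right₀ _ hπ.ne', round_intCast]
  have hrR : round ((Complex.im ∘ θ) R / π) = k - n := by
    apply round_eq_of_abs_sub_lt
    have : (Complex.im ∘ θ) R / π - ((k - n : ℤ) : ℝ) = φ / π := by
      rw [Function.comp_apply, hend, ← hk]; push_cast; field_simp; ring
    rw [this, abs_div, abs_of_pos hπ, div_lt_iff₀ hπ]
    linarith
  rw [hr0, hrR]; push_cast; ring
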